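/- arXiv:2207.03923 — 2 statements merged into one kernel-verified Lean document; each statement's English description precedes it below -/
import Mathlib

section
/- Let J : ℤ² → ℤ² be the involution (x,y) ↦ (x,−y), let P be a lattice polygon (the convex hull of a finite subset of ℤ²), and let L(P) be the lattice length of the projection of P to the horizontal axis. Then MV(P, J(P)) > 2·L(P), except in the following cases: (i) P is contained in a vertical line; (ii) P is, up to a translation, contained in the strip 0 ≤ y ≤ 1; (iii) P ∩ ℤ² is, up to a translation, contained in the set {y = 0} ∪ {(0,1),(0,−1)}. -/
/-! **Statement 17** (Lemma `lmvcompare`): a mixed-area inequality for lattice polygons,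
following Esterov–Lang, "Bernstein–Kouchnirenko–Khovanskii with a symmetry". -/

open scoped Pointwise
open MeasureTheory

noncomputable section

def toR2 (p : ℤ × ℤ) : ℝ × ℝ := ((p.1 : ℝ), (p.2 : ℝ))

/-- Lattice area of a plane set: `2! = 2` times its Euclidean area. -/
def latAreaSet (S : Set (ℝ × ℝ)) : ℝ := 2 * (volume S).toReal

/-- The lattice mixed area `MV(B₁,B₂) = Vol_ℤ(B₁+B₂) - Vol_ℤ(B₁) - Vol_ℤ(B₂)`. -/
def mixedArea (B₁ B₂ : Set (ℝ × ℝ)) : ℝ :=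
  latAreaSet (B₁ + B₂) - latAreaSet B₁ - latAreaSet B₂

/-- The involution `J : ℤ² → ℤ²`, `(x,y) ↦ (x,-y)`. -/
def Jinv (p : ℤ × ℤ) : ℤ × ℤ := (p.1, -p.2)


def fibW (P : Set (ℝ × ℝ)) (x : ℝ) : ℝ := volume.real (Prod.mk x ⁻¹' P)

lemma fibW_nonneg (P : Set (ℝ × ℝ)) (x : ℝ) : 0 ≤ fibW P x := measureReal_nonneg

lemma fibW_int {P : Set (ℝ × ℝ)} (hP : IsCompact P) : Integrable (fibW P) volume := by
  have := MeasureTheory.Measure.integrable_measure_prodMk_left (μ := (volume : Measure ℝ))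
    (ν := (volume : Measure ℝ)) hP.measurableSet (by
      rw [← Measure.volume_eq_prod]; exact hP.measure_lt_top.ne)
  exact this

lemma area_eq {P : Set (ℝ × ℝ)} (hP : IsCompact P) :
    (volume P).toReal = ∫ x, fibW P x := by
  rw [Measure.volume_eq_prod, Measure.prod_apply hP.measurableSet]
  unfold fibW
  rw [← integral_toReal]
  · rfl
  · exact (measurable_measure_prodMk_left hP.measurableSet).aemeasurable
  · refine Filter.Eventually.of_forall fun x => ?_
    have : IsCompact (Prod.mk x ⁻¹' P) := by
      have h : Prod.mk x ⁻¹' P ⊆ Prod.snd '' P := fun y hy => ⟨(x, y), hy, rfl⟩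
      exact (hP.image continuous_snd).of_isClosed_subset
        (hP.isClosed.preimage (by fun_prop)) h
    exact this.measure_lt_top

lemma fib_compact {P : Set (ℝ × ℝ)} (hP : IsCompact P) (x : ℝ) : IsCompact (Prod.mk x ⁻¹' P) := by
  have h : Prod.mk x ⁻¹' P ⊆ Prod.snd '' P := fun y hy => ⟨(x, y), hy, rfl⟩
  exact (hP.image continuous_snd).of_isClosed_subset
    (hP.isClosed.preimage (by fun_prop)) h

lemma fib_bounds {P : Set (ℝ × ℝ)} (hP : IsCompact P) (x : ℝ) (y : ℝ) (hy : (x, y) ∈ P) :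
    ∃ f g, (x, f) ∈ P ∧ (x, g) ∈ P ∧ fibW P x ≤ g - f := by
  have hc := fib_compact hP x
  have hne : (Prod.mk x ⁻¹' P).Nonempty := ⟨y, hy⟩
  refine ⟨_, _, hc.sInf_mem hne, hc.sSup_mem hne, ?_⟩
  have hsub : Prod.mk x ⁻¹' P ⊆ Set.Icc (sInf (Prod.mk x ⁻¹' P)) (sSup (Prod.mk x ⁻¹' P)) :=
    fun z hz => ⟨csInf_le hc.bddBelow hz, le_csSup hc.bddAbove hz⟩
  have hle : sInf (Prod.mk x ⁻¹' P) ≤ sSup (Prod.mk x ⁻¹' P) :=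
    (hsub hy).1.trans (hsub hy).2
  have := measureReal_mono hsub (μ := volume) (by simp)
  rwa [Real.volume_real_Icc_of_le hle] at this

lemma fib_lower {R : Set (ℝ × ℝ)} (hR : IsCompact R) (hc : Convex ℝ R)
    (hs : ∀ x y, (x, y) ∈ R → (x, -y) ∈ R) (x u : ℝ) (hu : (x, u) ∈ R) :
    2 * u ≤ fibW R x := by
  rcases le_or_gt u 0 with h | h
  · linarith [fibW_nonneg R x]
  have hsub : Set.Icc (-u) u ⊆ Prod.mk x ⁻¹' R := by
    intro z hz
    have := hc hu (hs x u hu) (a := (u + z) / (2 * u)) (b := (u - z) / (2 * u))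
      (div_nonneg (by linarith [hz.1]) (by linarith))
      (div_nonneg (by linarith [hz.2]) (by linarith)) (by field_simp; ring)
    have e : ((u + z) / (2 * u)) • ((x, u) : ℝ × ℝ) + ((u - z) / (2 * u)) • ((x, -u) : ℝ × ℝ)
        = (x, z) := by
      ext
      · simp; field_simp; ring
      · simp; field_simp; ring
    rw [e] at this
    exact this
  have := measureReal_mono hsub (μ := volume) (fib_compact hR x).measure_lt_top.ne
  rw [Real.volume_real_Icc_of_le (by linarith)] at this
  unfold fibW
  linarith

lemma key {P R : Set (ℝ × ℝ)} (hP : IsCompact P) (hPc : Convex ℝ P)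
    (hR : IsCompact R) (hRc : Convex ℝ R) (hs : ∀ x y, (x, y) ∈ R → (x, -y) ∈ R)
    (hPR : ∀ x y x' y', (x, y) ∈ P → (x', y') ∈ P → (x + x', y - y') ∈ R)
    {l r c y0 y1 e : ℝ} (hlc : l ≤ c) (hcr : c ≤ r) (hlr : l < r)
    (hsub : ∀ p ∈ P, l ≤ p.1 ∧ p.1 ≤ r)
    (h0 : (l, y0) ∈ P) (h1 : (r, y1) ∈ P) (he : (c, e) ∈ P) :
    2 * (volume P).toReal + 2 * ((r - l) * e - (c - l) * y0 - (r - c) * y1)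
      ≤ (volume R).toReal := by
  rw [area_eq hP, area_eq hR]
  have hw : ∀ s, l ≤ s → s ≤ r → ∃ f g, (s, f) ∈ P ∧ (s, g) ∈ P ∧ fibW P s ≤ g - f := by
    intro s h2 h3
    have hd : 0 < r - l := by linarith
    have := hPc h0 h1 (a := (r - s) / (r - l)) (b := (s - l) / (r - l))
      (div_nonneg (by linarith) hd.le) (div_nonneg (by linarith) hd.le) (by field_simp; ring)
    refine fib_bounds hP s (((r - s) / (r - l)) * y0 + ((s - l) / (r - l)) * y1) ?_
    convert this using 1
    ext
    · simp; field_simp; ring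
    · simp
  have iP := fibW_int hP
  have iR := fibW_int hR
  have II : ∀ a b, IntervalIntegrable (fibW R) volume a b := fun a b => iR.intervalIntegrable
  have IIP : ∀ a b, IntervalIntegrable (fibW P) volume a b := fun a b => iP.intervalIntegrable
  have IIs : ∀ d a b, IntervalIntegrable (fun s => fibW R (s + d)) volume a b :=
    fun d a b => (iR.comp_add_right d).intervalIntegrable
  have eP : ∫ x, fibW P x = ∫ x in l..r, fibW P x := by
    rw [intervalIntegral.integral_of_le hlr.le, ← integral_Icc_eq_integral_Ioc]
    symm
    apply setIntegral_eq_integral_of_forall_compl_eq_zero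
    intro x hx
    have : Prod.mk x ⁻¹' P = ∅ := by
      ext y
      simp only [Set.mem_preimage, Set.mem_empty_iff_false, iff_false]
      intro h
      exact hx (hsub _ h)
    simp [fibW, this]
  have eR : ∫ x in (2 * l)..(2 * r), fibW R x ≤ ∫ x, fibW R x := by
    rw [intervalIntegral.integral_of_le (by linarith)]
    exact setIntegral_le_integral iR (Filter.Eventually.of_forall (fibW_nonneg R))
  have split : ∫ x in (2 * l)..(2 * r), fibW R x
      = ((∫ s in l..c, fibW R (s + l)) + ∫ s in l..c, fibW R (s + c))
        + ((∫ s in c..r, fibW R (s + c)) + ∫ s in c..r, fibW R (s + r)) := by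
    simp only [intervalIntegral.integral_comp_add_right (fibW R)]
    rw [show l + c = c + l by ring, show r + c = c + r by ring, ← two_mul l, ← two_mul r,
      intervalIntegral.integral_add_adjacent_intervals (II _ _) (II _ _),
      intervalIntegral.integral_add_adjacent_intervals (II _ _) (II _ _),
      intervalIntegral.integral_add_adjacent_intervals (II _ _) (II _ _)]
  have A1 : ∫ s in l..c, (2 * fibW P s + 2 * (e - y0))
      ≤ (∫ s in l..c, fibW R (s + l)) + ∫ s in l..c, fibW R (s + c) := by
    rw [← intervalIntegral.integral_add (IIs _ _ _) (IIs _ _ _)]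
    apply intervalIntegral.integral_mono_on hlc
      (((IIP _ _).const_mul 2).add intervalIntegrable_const) ((IIs _ _ _).add (IIs _ _ _))
    intro s hs'
    obtain ⟨f, g, hf, hg, hfg⟩ := hw s hs'.1 (hs'.2.trans hcr)
    have a1 := fib_lower hR hRc hs _ _ (hPR _ _ _ _ hg h0)
    have a2 := fib_lower hR hRc hs _ _ (hPR _ _ _ _ he hf)
    rw [add_comm c s] at a2
    linarith
  have A2 : ∫ s in c..r, (2 * fibW P s + 2 * (e - y1))
      ≤ (∫ s in c..r, fibW R (s + c)) + ∫ s in c..r, fibW R (s + r) := by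
    rw [← intervalIntegral.integral_add (IIs _ _ _) (IIs _ _ _)]
    apply intervalIntegral.integral_mono_on hcr
      (((IIP _ _).const_mul 2).add intervalIntegrable_const) ((IIs _ _ _).add (IIs _ _ _))
    intro s hs'
    obtain ⟨f, g, hf, hg, hfg⟩ := hw s (hlc.trans hs'.1) hs'.2
    have a1 := fib_lower hR hRc hs _ _ (hPR _ _ _ _ hg h1)
    have a2 := fib_lower hR hRc hs _ _ (hPR _ _ _ _ he hf)
    rw [add_comm c s] at a2
    linarith
  rw [intervalIntegral.integral_add ((IIP _ _).const_mul 2) intervalIntegrable_const,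
    intervalIntegral.integral_const_mul, intervalIntegral.integral_const, smul_eq_mul] at A1 A2
  have eP2 := intervalIntegral.integral_add_adjacent_intervals (IIP l c) (IIP c r)
  rw [eP, ← eP2]
  nlinarith

/-- The reflection as a measure preserving linear map. -/
def Jr : (ℝ × ℝ) →ₗ[ℝ] (ℝ × ℝ) := LinearMap.prodMap LinearMap.id (-LinearMap.id)

lemma Jr_apply (p : ℝ × ℝ) : Jr p = (p.1, -p.2) := rfl

lemma J_hull (B : Finset (ℤ × ℤ)) :
    convexHull ℝ (toR2 '' ↑(B.image Jinv)) = Jr '' convexHull ℝ (toR2 '' ↑B) := by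
  rw [Jr.image_convexHull, Finset.coe_image, Set.image_image, Set.image_image]
  congr 1
  apply Set.image_congr
  intro p _
  simp [toR2, Jinv, Jr_apply]

lemma Jr_vol {P : Set (ℝ × ℝ)} (hP : IsCompact P) : volume (Jr '' P) = volume P := by
  have h : Jr '' P = Prod.map id Neg.neg ⁻¹' P := by
    ext p
    constructor
    · rintro ⟨q, hq, rfl⟩
      simpa [Jr_apply] using hq
    · intro hp
      exact ⟨(p.1, -p.2), hp, by simp [Jr_apply]⟩
  rw [h]
  have mp : MeasurePreserving (Prod.map id Neg.neg : ℝ × ℝ → ℝ × ℝ) volume volume :=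
    (MeasurePreserving.id volume).prod (Measure.measurePreserving_neg volume)
  exact mp.measure_preimage hP.measurableSet.nullMeasurableSet

lemma key2 {P : Set (ℝ × ℝ)} (hP : IsCompact P) (hPc : Convex ℝ P)
    {l r c y0 y1 e : ℝ} (hlc : l ≤ c) (hcr : c ≤ r) (hlr : l < r)
    (hsub : ∀ p ∈ P, l ≤ p.1 ∧ p.1 ≤ r)
    (h0 : (l, y0) ∈ P) (h1 : (r, y1) ∈ P) (he : (c, e) ∈ P) :
    2 * (volume P).toReal + 2 * |(r - l) * e - (c - l) * y0 - (r - c) * y1|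
      ≤ (volume (P + Jr '' P)).toReal := by
  have hJ : IsCompact (Jr '' P) := hP.image (by
    have : (Jr : ℝ × ℝ → ℝ × ℝ) = fun p => (p.1, -p.2) := rfl
    rw [this]; fun_prop)
  have hJc : Convex ℝ (Jr '' P) := hPc.linear_image Jr
  have mJ : ∀ x y, (x, y) ∈ P → (x, -y) ∈ Jr '' P := fun x y h => ⟨_, h, rfl⟩
  have mJ' : ∀ x y, (x, y) ∈ Jr '' P → (x, -y) ∈ P := by
    rintro x y ⟨q, hq, h⟩
    rw [Jr_apply, Prod.mk.injEq] at h
    rw [← h.1, ← h.2, neg_neg]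
    exact hq
  have hs : ∀ x y, (x, y) ∈ P + Jr '' P → (x, -y) ∈ P + Jr '' P := by
    rintro x y ⟨⟨a, b⟩, hp, ⟨a', b'⟩, hq, h⟩
    simp only [Prod.mk_add_mk, Prod.mk.injEq] at h
    refine ⟨_, mJ' _ _ hq, _, mJ _ _ hp, ?_⟩
    simp only [Prod.mk_add_mk, Prod.mk.injEq]
    constructor <;> linarith [h.1, h.2]
  have k1 := key hP hPc (hP.add hJ) (hPc.add hJc) hs (fun x y x' y' h h' =>
    ⟨_, h, _, mJ _ _ h', by simp [sub_eq_add_neg]⟩) hlc hcr hlr hsub h0 h1 he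
  have k2 := key hJ hJc (hP.add hJ) (hPc.add hJc) hs (fun x y x' y' h h' =>
    ⟨_, mJ' _ _ h', _, h, by simp [sub_eq_add_neg, add_comm]⟩) hlc hcr hlr
    (by rintro _ ⟨q, hq, rfl⟩; exact hsub q hq) (mJ _ _ h0) (mJ _ _ h1) (mJ _ _ he)
  rw [Jr_vol hP] at k2
  rcases abs_cases ((r - l) * e - (c - l) * y0 - (r - c) * y1) with ⟨h, _⟩ | ⟨h, _⟩ <;>
    rw [h] <;> linarith

/-- Lemma `lmvcompare`. Let `J : ℤ² → ℤ²` be the involution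
`(x,y) ↦ (x,-y)`, let `P` be a lattice polygon (the convex hull of a nonempty finite
subset `B ⊆ ℤ²`), and let `L(P)` be the lattice length of the projection of `P` to the
horizontal axis. Then `MV(P, J(P)) > 2·L(P)`, except in the following cases:
(i) `P` is contained in a vertical line;
(ii) `P` is, up to a translation, contained in the strip `0 ≤ y ≤ 1`;
(iii) `P ∩ ℤ²` is, up to a translation, contained in `{y = 0} ∪ {(0,1),(0,-1)}`. -/
theorem statement17 (B : Finset (ℤ × ℤ)) (hB : B.Nonempty)
    (P : Set (ℝ × ℝ)) (hP : P = convexHull ℝ (toR2 '' ↑B))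
    -- (i): `P` is not contained in a vertical line
    (h1 : ¬ ∀ p ∈ B, ∀ q ∈ B, p.1 = q.1)
    -- (ii): `P` is not contained in a horizontal strip of height 1, up to translation
    (h2 : ¬ ∃ c : ℤ, ∀ p ∈ B, p.2 = c ∨ p.2 = c + 1)
    -- (iii): the lattice points of `P` are not contained, up to translation, in
    -- `{y = 0} ∪ {(0,1),(0,-1)}`
    (h3 : ¬ ∃ v : ℤ × ℤ, ∀ z : ℤ × ℤ, toR2 z ∈ P →
        (z - v).2 = 0 ∨ z - v = (0, 1) ∨ z - v = (0, -1)) :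
    2 * ((B.sup' hB Prod.fst : ℤ) - (B.inf' hB Prod.fst : ℤ) : ℝ)
      < mixedArea P (convexHull ℝ (toR2 '' ↑(B.image Jinv))) := by
  subst hP
  rw [J_hull]
  set P := convexHull ℝ (toR2 '' (↑B : Set (ℤ × ℤ))) with hPdef
  have hPcomp : IsCompact P := (B.finite_toSet.image toR2).isCompact_convexHull (𝕜 := ℝ)
  have hPconv : Convex ℝ P := convex_convexHull ℝ _
  have hmem : ∀ p ∈ B, ((p.1 : ℝ), (p.2 : ℝ)) ∈ P := fun p hp =>
    subset_convexHull ℝ _ ⟨p, hp, rfl⟩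
  obtain ⟨pr, hpr, er⟩ := B.exists_mem_eq_sup' hB Prod.fst
  obtain ⟨pl, hpl, el⟩ := B.exists_mem_eq_inf' hB Prod.fst
  have hr : ∀ p ∈ B, p.1 ≤ pr.1 := fun p hp => er ▸ B.le_sup' Prod.fst hp
  have hl : ∀ p ∈ B, pl.1 ≤ p.1 := fun p hp => el ▸ B.inf'_le Prod.fst hp
  rw [er, el]
  have hlr : pl.1 < pr.1 := by
    by_contra hcon
    apply h1
    intro p hp q hq
    have := hr p hp
    have := hl p hp
    have := hr q hq
    have := hl q hq
    omega
  have hlr' : (pl.1 : ℝ) < pr.1 := by exact_mod_cast hlr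
  have hsub : ∀ p ∈ P, (pl.1 : ℝ) ≤ p.1 ∧ p.1 ≤ pr.1 := by
    have hcv : Convex ℝ (Prod.fst ⁻¹' Set.Icc (pl.1 : ℝ) pr.1 : Set (ℝ × ℝ)) :=
      (convex_Icc (𝕜 := ℝ) (pl.1 : ℝ) pr.1).linear_preimage (LinearMap.fst ℝ ℝ ℝ)
    have : P ⊆ Prod.fst ⁻¹' Set.Icc (pl.1 : ℝ) pr.1 := by
      apply convexHull_min _ hcv
      rintro _ ⟨p, hp, rfl⟩
      exact ⟨Int.cast_le.2 (hl p hp), Int.cast_le.2 (hr p hp)⟩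
    exact fun p hp => this hp
  have hex : ∃ p ∈ B, 2 * ((pr.1 : ℝ) - pl.1) ≤
      2 * |((pr.1 : ℝ) - pl.1) * p.2 - (p.1 - pl.1) * pl.2 - (pr.1 - p.1) * pr.2| := by
    have habs : ∀ d : ℤ, d ≠ 0 → 2 * ((pr.1 : ℝ) - pl.1) ≤ 2 * |((pr.1 : ℝ) - pl.1) * d| := by
      intro d hd
      have : (1 : ℝ) ≤ |(d : ℝ)| := by exact_mod_cast Int.one_le_abs hd
      rw [abs_mul, abs_of_pos (sub_pos.2 hlr')]
      nlinarith
    by_cases hy : pl.2 = pr.2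
    · have : ∃ p ∈ B, p.2 ≠ pl.2 := by
        by_contra! hcon
        exact h2 ⟨pl.2, fun p hp => Or.inl (hcon p hp)⟩
      obtain ⟨p, hp, hne⟩ := this
      refine ⟨p, hp, ?_⟩
      convert habs (p.2 - pl.2) (sub_ne_zero.2 hne) using 3
      rw [← hy]; push_cast; ring
    · refine ⟨pl, hpl, ?_⟩
      convert habs (pl.2 - pr.2) (sub_ne_zero.2 hy) using 3
      push_cast; ring
  obtain ⟨p, hp, hb⟩ := hex
  have hk := key2 hPcomp hPconv (l := pl.1) (r := pr.1) (c := p.1)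
    (by exact_mod_cast hl p hp) (by exact_mod_cast hr p hp) hlr' hsub
    (hmem _ hpl) (hmem _ hpr) (hmem _ hp)
  unfold mixedArea latAreaSet
  rw [Jr_vol hPcomp]
  linarith

end
end

section
/- Let f and g : ℂ² → ℂ be polynomials such that x₀ is a root of multiplicity 1 of the one-variable polynomial f(x,0), and such that f − g = y^k · r(x,y) for some integer k ≥ 0 and a polynomial r with r(x₀,0) ≠ 0. Then the curves {f = 0} and {g = 0} are smooth near the point p = (x₀,0), and their local intersection number at p equals k (i.e. they have tangency of order k − 1 at p when k > 0, and they do not meet at p when k = 0). -/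
/-! **Statement 19** (Lemma `lintersatorb`): local intersection numbers of two plane
curves, following Esterov–Lang, "Bernstein–Kouchnirenko–Khovanskii with a symmetry". -/

noncomputable section

open MvPolynomial

/-- Evaluation of a two-variable polynomial at `(x,y)`. -/
def ev2 (f : MvPolynomial (Fin 2) ℂ) (x y : ℂ) : ℂ := eval ![x, y] f

theorem ev2_hasDerivAt (f : MvPolynomial (Fin 2) ℂ) (x y : ℂ) :
    HasDerivAt (fun x => ev2 f x y) (ev2 (pderiv 0 f) x y) x := by
  unfold ev2
  induction f using MvPolynomial.induction_on with
  | C a => simpa using hasDerivAt_const x a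
  | add p q hp hq => simpa using hp.fun_add hq
  | mul_X p i hp =>
    have hX : HasDerivAt (fun x => eval ![x, y] (X i : MvPolynomial (Fin 2) ℂ))
        (eval ![x, y] (pderiv 0 (X i : MvPolynomial (Fin 2) ℂ))) x := by
      fin_cases i
      · simpa using hasDerivAt_id' x
      · simpa using hasDerivAt_const x y
    have := hp.fun_mul hX
    simp only [Derivation.leibniz, smul_eq_mul, map_add, map_mul]
    convert! this using 1
    ring

theorem ev2_analyticAt {E : Type*} [NormedAddCommGroup E] [NormedSpace ℂ E]
    (f : MvPolynomial (Fin 2) ℂ) {a b : E → ℂ} {z : E}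
    (ha : AnalyticAt ℂ a z) (hb : AnalyticAt ℂ b z) :
    AnalyticAt ℂ (fun w => ev2 f (a w) (b w)) z := by
  have := AnalyticAt.aeval_mvPolynomial (𝕜 := ℂ) (f := fun w => ![a w, b w]) (z := z)
    (by intro i; fin_cases i <;> simpa) f
  simpa [ev2, MvPolynomial.aeval_eq_eval] using this

theorem ev2_continuous (f : MvPolynomial (Fin 2) ℂ) :
    Continuous (fun q : ℂ × ℂ => ev2 f q.1 q.2) :=
  continuous_iff_continuousAt.2 fun _ =>
    (ev2_analyticAt f analyticAt_fst analyticAt_snd).continuousAt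

/-- Lemma `lintersatorb`. Let `f, g : ℂ² → ℂ` be polynomials such
that `x₀` is a root of multiplicity `1` of the one-variable polynomial `f(x,0)` (i.e.
`f(x₀,0) = 0` and `∂f/∂x(x₀,0) ≠ 0`), and such that `f - g = y^k · r(x,y)` for some
`k ≥ 0` and a polynomial `r` with `r(x₀,0) ≠ 0`. Then the curves `{f = 0}` and `{g = 0}`
are smooth near `p = (x₀,0)`, and their local intersection number at `p` equals `k`:
near `p` the curve `{f = 0}` is the graph `x = ψ(y)` of an analytic function `ψ`, and the
restriction `g(ψ(y), y)` of `g` to it vanishes at `y = 0` to order exactly `k` (tangency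
of order `k - 1` for `k > 0`, and no intersection for `k = 0`). -/
theorem statement19 (f g r : MvPolynomial (Fin 2) ℂ) (k : ℕ) (x₀ : ℂ)
    (hroot : ev2 f x₀ 0 = 0) (hsimple : ev2 (pderiv 0 f) x₀ 0 ≠ 0)
    (hfg : f - g = (X 1) ^ k * r) (hr : ev2 r x₀ 0 ≠ 0) :
    -- `{f = 0}` is smooth near `p`
    (∃ U : Set (ℂ × ℂ), IsOpen U ∧ (x₀, 0) ∈ U ∧ ∀ q ∈ U, ev2 f q.1 q.2 = 0 →
        (ev2 (pderiv 0 f) q.1 q.2 ≠ 0 ∨ ev2 (pderiv 1 f) q.1 q.2 ≠ 0)) ∧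
    -- `{g = 0}` is smooth near `p`
    (∃ U : Set (ℂ × ℂ), IsOpen U ∧ (x₀, 0) ∈ U ∧ ∀ q ∈ U, ev2 g q.1 q.2 = 0 →
        (ev2 (pderiv 0 g) q.1 q.2 ≠ 0 ∨ ev2 (pderiv 1 g) q.1 q.2 ≠ 0)) ∧
    -- the local intersection number of `{f = 0}` and `{g = 0}` at `p` equals `k`
    (∃ ψ : ℂ → ℂ, AnalyticAt ℂ ψ 0 ∧ ψ 0 = x₀ ∧
      (∀ᶠ y in nhds (0 : ℂ), ev2 f (ψ y) y = 0) ∧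
      (∀ᶠ q : ℂ × ℂ in nhds ((x₀, 0) : ℂ × ℂ), (ev2 f q.1 q.2 = 0 ↔ q.1 = ψ q.2)) ∧
      ∃ h : ℂ → ℂ, AnalyticAt ℂ h 0 ∧ h 0 ≠ 0 ∧
        (∀ᶠ y in nhds (0 : ℂ), ev2 g (ψ y) y = y ^ k * h y)) := by
  have key : ∀ x y, ev2 g x y = ev2 f x y - y ^ k * ev2 r x y := by
    intro x y
    have : g = f - (X 1) ^ k * r := by rw [← hfg]; ring
    rw [this]; simp [ev2]
  refine ⟨⟨{q | ev2 (pderiv 0 f) q.1 q.2 ≠ 0}, ?_, hsimple, fun q hq _ => Or.inl hq⟩, ?_, ?_⟩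
  · exact isOpen_ne_fun (ev2_continuous _) continuous_const
  · rcases Nat.eq_zero_or_pos k with hk | hk
    · refine ⟨{q | ev2 g q.1 q.2 ≠ 0}, isOpen_ne_fun (ev2_continuous _) continuous_const, ?_,
        fun q hq h => absurd h hq⟩
      simp [key, hk, hroot, hr]
    · refine ⟨{q | ev2 (pderiv 0 g) q.1 q.2 ≠ 0},
        isOpen_ne_fun (ev2_continuous _) continuous_const, ?_, fun q hq _ => Or.inl hq⟩
      have h1 : HasDerivAt (fun x => ev2 g x 0) (ev2 (pderiv 0 f) x₀ 0) x₀ := by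
        have : (fun x => ev2 g x 0) = fun x => ev2 f x 0 := by
          ext x; simp [key, hk.ne']
        rw [this]; exact ev2_hasDerivAt f x₀ 0
      have h2 := (ev2_hasDerivAt g x₀ 0).unique h1
      simpa [h2] using hsimple
  · let F : ℂ × ℂ → ℂ := fun v => ev2 f v.2 v.1
    have hF : AnalyticAt ℂ F (0, x₀) := ev2_analyticAt f analyticAt_snd analyticAt_fst
    have cdf : ContDiffAt ℂ ⊤ F (0, x₀) := hF.contDiffAt
    have hF0 : F (0, x₀) = 0 := hroot
    have hlin : fderiv ℂ F (0, x₀) (0, 1) = ev2 (pderiv 0 f) x₀ 0 := by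
      have h1 : HasDerivAt (fun x : ℂ => ((0 : ℂ), x)) ((0 : ℂ), (1 : ℂ)) x₀ :=
        (hasDerivAt_const x₀ (0 : ℂ)).prodMk (hasDerivAt_id x₀)
      have h2 := (hF.differentiableAt.hasFDerivAt).comp_hasDerivAt x₀ h1
      exact h2.unique (ev2_hasDerivAt f x₀ 0)
    have if₂ : (fderiv ℂ F (0, x₀) ∘L .inr ℂ ℂ ℂ).IsInvertible := by
      refine ⟨ContinuousLinearEquiv.unitsEquivAut ℂ (Units.mk0 _ hsimple), ?_⟩
      ext
      simp [hlin]
    have hne : (⊤ : WithTop ℕ∞) ≠ 0 := by simp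
    have hψ : AnalyticAt ℂ (cdf.implicitFunction hne if₂) 0 :=
      (cdf.contDiffAt_implicitFunction hne if₂).analyticAt
    have hψ0 : cdf.implicitFunction hne if₂ 0 = x₀ := cdf.implicitFunction_apply_self hne if₂
    have hev : ∀ᶠ y in nhds (0 : ℂ), ev2 f (cdf.implicitFunction hne if₂ y) y = 0 := by
      have := cdf.eventually_apply_implicitFunction hne if₂
      rw [hF0] at this
      exact this
    have hiff := cdf.eventually_apply_eq_iff_implicitFunction hne if₂
    rw [hF0] at hiff
    generalize cdf.implicitFunction hne if₂ = ψ at *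
    refine ⟨ψ, hψ, hψ0, hev, ?_, fun y => -ev2 r (ψ y) y,
      (ev2_analyticAt r hψ analyticAt_id).neg, by simpa [hψ0] using hr, ?_⟩
    · have ht : Filter.Tendsto (Prod.swap : ℂ × ℂ → ℂ × ℂ) (nhds (x₀, 0)) (nhds (0, x₀)) :=
        continuous_swap.tendsto (x₀, (0 : ℂ))
      filter_upwards [ht.eventually hiff] with q hq
      exact hq.trans eq_comm
    · filter_upwards [hev] with y hy
      rw [key, hy]; ring

end
end
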